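/- arXiv:2310.14742 — 2 statements merged into one kernel-verified Lean document; each statement's English description precedes it below -/
import Mathlib

section
/- Let d ≥ 3 and let D ⊂ ℝ^d be a hyperbolic convex domain. Let p, q ∈ D be distinct points, let L be the real line containing p and q, and let ξ ∈ L ∖ D. Then (1/2)|log(‖ξ−p‖/‖ξ−q‖)| ≤ ρ_D(p,q). -/
/-!
The lower bound comes from comparing `D` with a half-space. By Hahn–Banach there is a linear
functional `l` with `l < l ξ` on `D`. If `f` is a conformal harmonic disk in `D`, then `l ξ - l ∘ f`
is a positive harmonic function on the disk, and the sharp Harnack gradient estimate at the centre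
(`abs_apply_pd_le`) gives `|l (f_x 0)| ≤ 2 (l ξ - l (f 0))`. Hence
`g_D(x, v) ≥ |l v| / (2 (l ξ - l x))` (`le_minMetric`), and the right-hand side is `1/2` times the
absolute derivative of `log (l ξ - l x)` in the direction `v`. Integrating along a curve from `p`
to `q` (`sub_le_integral_of_piecewiseC1On`) yields
`(1/2) |log ((l ξ - l p) / (l ξ - l q))| ≤ ρ_D(p, q)`, and since `ξ, p, q` are collinear the
quotient equals `‖ξ - p‖ / ‖ξ - q‖`. Only the harmonicity of the disks enters the estimate.

The Harnack estimate is the Schwarz lemma: a positive harmonic function on the disk is the real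
part of a holomorphic `F`, and `(F - F 0) / (F + conj (F 0))` is a self-map of the disk fixing `0`.

Two junk values have to be excluded. The infimum defining `g_D(x, v)` is over a nonempty set because
a small flat disk spanned by `v` and an orthogonal vector of the same norm fits into the open set
`D`. A curve along which `g_D` is not integrable would have length `0` by convention, which would
force `ρ_D(p, q) ≤ 0`; hyperbolicity rules this out.
-/

open scoped RealInnerProductSpace ENNReal
open Metric Set Filter

noncomputable section

/-- Euclidean space `ℝ^d`. -/
abbrev Euc (d : ℕ) := EuclideanSpace ℝ (Fin d)

/-- The open unit disk in `ℝ²`. -/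
def unitDisk : Set (Euc 2) := Metric.ball 0 1

/-- Partial derivative of `f` at `z` in the `i`-th coordinate direction. -/
def pd {d : ℕ} (i : Fin 2) (f : Euc 2 → Euc d) (z : Euc 2) : Euc d :=
  fderiv ℝ f z (EuclideanSpace.single i 1)

/-- `f` is a conformal harmonic map on the unit disk: it is `C²`, its (vector)
Laplacian vanishes (equivalently, every component is harmonic), and at each point
its two partial derivatives are orthogonal and of equal norm. -/
def ConformalHarmonicOnDisk {d : ℕ} (f : Euc 2 → Euc d) : Prop :=
  ContDiffOn ℝ 2 f unitDisk ∧
  (∀ z ∈ unitDisk,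
    fderiv ℝ (pd 0 f) z (EuclideanSpace.single 0 1)
      + fderiv ℝ (pd 1 f) z (EuclideanSpace.single 1 1) = 0) ∧
  (∀ z ∈ unitDisk, ‖pd 0 f z‖ = ‖pd 1 f z‖ ∧ ⟪pd 0 f z, pd 1 f z⟫ = 0)

/-- The minimal (Forstnerič–Kalaj) metric of a domain `D ⊆ ℝ^d`:
`g_D(x,v) = inf {1/r : r > 0, f ∈ CH(𝔻, D), f 0 = x, f_x 0 = r • v}`. -/
def minMetric {d : ℕ} (D : Set (Euc d)) (x v : Euc d) : ℝ :=
  sInf {c : ℝ | ∃ r : ℝ, 0 < r ∧ c = 1 / r ∧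
    ∃ f : Euc 2 → Euc d, ConformalHarmonicOnDisk f ∧ (∀ z ∈ unitDisk, f z ∈ D) ∧
      f 0 = x ∧ pd 0 f 0 = r • v}

/-- `γ` is a piecewise `C¹` curve on `[a, b]`. -/
def PiecewiseC1On {d : ℕ} (γ : ℝ → Euc d) (a b : ℝ) : Prop :=
  ContinuousOn γ (Set.Icc a b) ∧
  ∃ (n : ℕ) (t : Fin (n + 2) → ℝ), Monotone t ∧ t 0 = a ∧ t (Fin.last (n + 1)) = b ∧
    ∀ i : Fin (n + 1), ContDiffOn ℝ 1 γ (Set.Icc (t i.castSucc) (t i.succ))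

/-- The minimal pseudodistance `ρ_D`: infimum of minimal lengths of piecewise `C¹`
curves in `D` joining `x` to `y`. -/
def minDist {d : ℕ} (D : Set (Euc d)) (x y : Euc d) : ℝ :=
  sInf {L : ℝ | ∃ γ : ℝ → Euc d, PiecewiseC1On γ 0 1 ∧
    (∀ t ∈ Set.Icc (0:ℝ) 1, γ t ∈ D) ∧ γ 0 = x ∧ γ 1 = y ∧
    L = ∫ t in (0:ℝ)..(1:ℝ), minMetric D (γ t) (deriv γ t)}

/-- The Gromov product `(x|y)_o` with respect to the minimal pseudodistance of `D`. -/
def gromovProd {d : ℕ} (D : Set (Euc d)) (o x y : Euc d) : ℝ :=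
  (minDist D x o + minDist D y o - minDist D x y) / 2

/-- `D` is hyperbolic: the minimal pseudodistance is a genuine distance. -/
def MinHyperbolic {d : ℕ} (D : Set (Euc d)) : Prop :=
  ∀ x ∈ D, ∀ y ∈ D, x ≠ y → 0 < minDist D x y

/-- The Hessian quadratic form of `u` at `x` in direction `v`. -/
def hessQ {d : ℕ} (u : Euc d → ℝ) (x v : Euc d) : ℝ :=
  fderiv ℝ (fun y => fderiv ℝ u y v) x v

/-- `D` is a bounded domain with `C²` boundary, described by a `C²` defining
function `u` on a neighborhood `U` of `∂D` with nonvanishing differential. -/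
def IsC2BoundedDomain {d : ℕ} (D : Set (Euc d)) : Prop :=
  IsOpen D ∧ IsConnected D ∧ Bornology.IsBounded D ∧
  ∃ (U : Set (Euc d)) (u : Euc d → ℝ), IsOpen U ∧ frontier D ⊆ U ∧ ContDiffOn ℝ 2 u U ∧
    D ∩ U = {x | x ∈ U ∧ u x < 0} ∧ frontier D = {x | x ∈ U ∧ u x = 0} ∧
    ∀ x ∈ frontier D, fderiv ℝ u x ≠ 0

/-- `D` is a bounded strongly minimally convex domain: it has a `C²` defining function
which is strongly minimally plurisubharmonic near `∂D`, i.e. the trace of its Hessian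
on every 2-plane (spanned by an orthonormal pair `v, w`) is strictly positive. -/
def IsStronglyMinimallyConvex {d : ℕ} (D : Set (Euc d)) : Prop :=
  IsOpen D ∧ IsConnected D ∧ Bornology.IsBounded D ∧
  ∃ (U : Set (Euc d)) (u : Euc d → ℝ), IsOpen U ∧ frontier D ⊆ U ∧ ContDiffOn ℝ 2 u U ∧
    D ∩ U = {x | x ∈ U ∧ u x < 0} ∧ frontier D = {x | x ∈ U ∧ u x = 0} ∧
    (∀ x ∈ frontier D, fderiv ℝ u x ≠ 0) ∧
    (∀ x ∈ U, ∀ v w : Euc d, ‖v‖ = 1 → ‖w‖ = 1 → ⟪v, w⟫ = 0 →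
      0 < hessQ u x v + hessQ u x w)

/-- `D` is a bounded strongly convex domain: convex, with a `C²` defining function whose
Hessian is positive definite on the tangent space at every boundary point
(equivalently, all principal curvatures of `∂D` w.r.t. the inner normal are positive). -/
def IsStronglyConvexDomain {d : ℕ} (D : Set (Euc d)) : Prop :=
  IsOpen D ∧ IsConnected D ∧ Bornology.IsBounded D ∧ Convex ℝ D ∧
  ∃ (U : Set (Euc d)) (u : Euc d → ℝ), IsOpen U ∧ frontier D ⊆ U ∧ ContDiffOn ℝ 2 u U ∧
    D ∩ U = {x | x ∈ U ∧ u x < 0} ∧ frontier D = {x | x ∈ U ∧ u x = 0} ∧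
    (∀ x ∈ frontier D, fderiv ℝ u x ≠ 0) ∧
    (∀ ξ ∈ frontier D, ∀ w : Euc d, w ≠ 0 → fderiv ℝ u ξ w = 0 → 0 < hessQ u ξ w)

/-- For `x ∈ D` with nearest boundary point `p`, the outer unit normal direction
`n_{π(x)} = (p - x)/‖p - x‖`. -/
def nvec {d : ℕ} (x p : Euc d) : Euc d := ‖p - x‖⁻¹ • (p - x)

/-- Normal component of `v` at `x` with nearest boundary point `p`. -/
def vN {d : ℕ} (x p v : Euc d) : Euc d := ⟪v, nvec x p⟫ • nvec x p

/-- Tangential component of `v` at `x` with nearest boundary point `p`. -/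
def vT {d : ℕ} (x p v : Euc d) : Euc d := v - vN x p v

/-- The intrinsic distance `H` on the boundary `∂D`: infimum of Euclidean lengths of
piecewise `C¹` curves in `∂D` joining two boundary points. -/
def bdist {d : ℕ} (D : Set (Euc d)) (ξ η : Euc d) : ℝ :=
  sInf {L : ℝ | ∃ α : ℝ → Euc d, PiecewiseC1On α 0 1 ∧
    (∀ t ∈ Set.Icc (0:ℝ) 1, α t ∈ frontier D) ∧ α 0 = ξ ∧ α 1 = η ∧
    L = ∫ t in (0:ℝ)..(1:ℝ), ‖deriv α t‖}

/-- `h(x) = δ_D(x)^{1/2}`. -/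
def hfun {d : ℕ} (D : Set (Euc d)) (x : Euc d) : ℝ :=
  Real.sqrt (Metric.infDist x (frontier D))

/-- The length of a curve with respect to the boundary Finsler metric
`F(x,v) = ‖v_N‖/(2 δ_D(x)) + ‖v_T‖/δ_D(x)^{1/2}`. -/
def Flen {d : ℕ} (D : Set (Euc d)) (π : Euc d → Euc d) (γ : ℝ → Euc d) : ℝ :=
  ∫ t in (0:ℝ)..(1:ℝ),
    (‖vN (γ t) (π (γ t)) (deriv γ t)‖ / (2 * Metric.infDist (γ t) (frontier D))
      + ‖vT (γ t) (π (γ t)) (deriv γ t)‖ / Real.sqrt (Metric.infDist (γ t) (frontier D)))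

/-- The filling Finsler metric `F`: the boundary Finsler metric on
`N = {δ_D ≤ ε}` and `c‖v‖` elsewhere. -/
def Fmet {d : ℕ} (D : Set (Euc d)) (π : Euc d → Euc d) (ε c : ℝ) (x v : Euc d) : ℝ :=
  if Metric.infDist x (frontier D) ≤ ε then
    ‖vN x (π x) v‖ / (2 * Metric.infDist x (frontier D))
      + ‖vT x (π x) v‖ / Real.sqrt (Metric.infDist x (frontier D))
  else c * ‖v‖

/-- The intrinsic distance `d_F` associated to the filling Finsler metric `F`. -/
def dF {d : ℕ} (D : Set (Euc d)) (π : Euc d → Euc d) (ε c : ℝ) (x y : Euc d) : ℝ :=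
  sInf {L : ℝ | ∃ γ : ℝ → Euc d, PiecewiseC1On γ 0 1 ∧
    (∀ t ∈ Set.Icc (0:ℝ) 1, γ t ∈ D) ∧ γ 0 = x ∧ γ 1 = y ∧
    L = ∫ t in (0:ℝ)..(1:ℝ), Fmet D π ε c (γ t) (deriv γ t)}

/-- The hyperbolic filling distance
`d_H(x,y) = 2 log((H(π x, π y) + h(x) ∨ h(y)) / √(h(x) h(y)))`. -/
def dH {d : ℕ} (D : Set (Euc d)) (π : Euc d → Euc d) (x y : Euc d) : ℝ :=
  2 * Real.log ((bdist D (π x) (π y) + max (hfun D x) (hfun D y)) /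
    Real.sqrt (hfun D x * hfun D y))

/-- `δ̂_D(x,v)`: the supremum over 2-dimensional linear subspaces `Λ ∋ v` of the
distance (in `ℝ≥0∞`, so `∞` if `x + Λ ⊆ D`) from `x` to `(x + Λ) \ D`. -/
def deltaHat {d : ℕ} (D : Set (Euc d)) (x v : Euc d) : ℝ≥0∞ :=
  ⨆ (Λ : Submodule ℝ (Euc d)) (_ : Module.finrank ℝ Λ = 2) (_ : v ∈ Λ),
    ⨅ (y : Euc d) (_ : y - x ∈ Λ ∧ y ∉ D), edist x y

/-- The positive parameter at which the ray `t ↦ x + t • v` exits the convex domain `D`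
(equal to `0`, by the `sInf ∅ = 0` convention, when the ray stays in `D`,
i.e. when the corresponding chord endpoint is the point at infinity). -/
def chordParam {d : ℕ} (D : Set (Euc d)) (x v : Euc d) : ℝ :=
  sInf {s : ℝ | 0 < s ∧ x + s • v ∉ D}

/-- The Hilbert Finsler metric `h_D(x,v) = (‖v‖/2)(1/‖x-a‖ + 1/‖x-b‖)` of a convex
domain, with the convention `1/‖x-∞‖ = 0` (here `‖x-b‖ = chordParam D x v • ‖v‖` and
`‖x-a‖ = chordParam D x (-v) • ‖v‖`, and division by zero is zero). -/
def hilbertFinsler {d : ℕ} (D : Set (Euc d)) (x v : Euc d) : ℝ :=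
  (1/2) * (1 / chordParam D x v + 1 / chordParam D x (-v))

/- The Hilbert distance of a convex domain: for `x ≠ y`,
`H_D(x,y) = ½ log((‖x-b‖ ‖y-a‖)/(‖x-a‖ ‖y-b‖))` where `a, x, y, b` are aligned on the
chord through `x, y`, with the convention that ratios involving the point at infinity
(detected by `chordParam = 0`) are equal to `1`. -/
open Classical in
def hilbertDist {d : ℕ} (D : Set (Euc d)) (x y : Euc d) : ℝ :=
  if x = y then 0 else
    (1/2) * Real.log
      ((if chordParam D x (y - x) = 0 then 1
        else chordParam D x (y - x) / (chordParam D x (y - x) - 1)) *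
       (if chordParam D x (x - y) = 0 then 1
        else (1 + chordParam D x (x - y)) / chordParam D x (x - y)))

/-! ### The Harnack gradient estimate on the disk -/

/-- Schwarz lemma for maps of the disk into the right half-plane, obtained by composing with the
Cayley transform centred at `F 0`. -/
theorem norm_deriv_le_two_mul_re {F : ℂ → ℂ} (hF : DifferentiableOn ℂ F (ball 0 1))
    (hpos : ∀ z ∈ ball (0 : ℂ) 1, 0 < (F z).re) : ‖deriv F 0‖ ≤ 2 * (F 0).re := by
  have h0 : (0 : ℂ) ∈ ball (0 : ℂ) 1 := by simp
  have ha := hpos 0 h0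
  set a := F 0 with ha_def
  have hne : ∀ z ∈ ball (0 : ℂ) 1, F z + (starRingEnd ℂ) a ≠ 0 := by
    intro z hz h
    have := congrArg Complex.re h
    simp at this
    linarith [hpos z hz]
  let G : ℂ → ℂ := fun z => (F z - a) / (F z + (starRingEnd ℂ) a)
  have hG : DifferentiableOn ℂ G (ball 0 1) :=
    (hF.sub_const a).div (hF.add_const _) hne
  have hG0 : G 0 = 0 := by simp [G, ha_def]
  have hmaps : MapsTo G (ball 0 1) (ball (G 0) 1) := by
    intro z hz
    rw [hG0, mem_ball_zero_iff, norm_div, div_lt_one (norm_pos_iff.2 (hne z hz)),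
      ← sq_lt_sq₀ (norm_nonneg _) (norm_nonneg _), ← Complex.normSq_eq_norm_sq,
      ← Complex.normSq_eq_norm_sq, Complex.normSq_apply, Complex.normSq_apply]
    simp only [Complex.sub_re, Complex.sub_im, Complex.add_re, Complex.add_im, Complex.conj_re,
      Complex.conj_im]
    nlinarith [mul_pos (hpos z hz) ha]
  have hle : ‖deriv G 0‖ ≤ 1 :=
    Complex.norm_deriv_le_one_of_mapsTo_ball hG (hmaps.mono_right ball_subset_closedBall) one_pos
  have hFd : HasDerivAt F (deriv F 0) 0 :=
    (hF.differentiableAt (isOpen_ball.mem_nhds h0)).hasDerivAt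
  have hsum : a + (starRingEnd ℂ) a = ((2 * a.re : ℝ) : ℂ) := Complex.add_conj a
  have h2 : ((2 * a.re : ℝ) : ℂ) ≠ 0 := by exact_mod_cast (by positivity : 2 * a.re ≠ 0)
  have hGd : HasDerivAt G (deriv F 0 / ((2 * a.re : ℝ) : ℂ)) 0 := by
    refine ((hFd.sub_const a).div (hFd.add_const ((starRingEnd ℂ) a)) (hne 0 h0)).congr_deriv ?_
    rw [← ha_def, hsum]
    field_simp
    ring
  rw [hGd.deriv, norm_div, Complex.norm_real, Real.norm_of_nonneg (by positivity),
    div_le_one (by positivity)] at hle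
  exact hle

open InnerProductSpace in
/-- Sharp Harnack gradient estimate at the centre of the disk, in the direction `1`. -/
theorem abs_fderiv_le_two_mul {h : ℂ → ℝ} (hh : HarmonicOnNhd h (ball 0 1))
    (hpos : ∀ z ∈ ball (0 : ℂ) 1, 0 < h z) : |fderiv ℝ h 0 1| ≤ 2 * h 0 := by
  have h0 : (0 : ℂ) ∈ ball (0 : ℂ) 1 := by simp
  obtain ⟨F, hF, hre⟩ := hh.exists_analyticOnNhd_ball_re_eq
  have hFd : HasDerivAt F (deriv F 0) 0 := (hF 0 h0).differentiableAt.hasDerivAt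
  have heq : h =ᶠ[nhds 0] fun z => (F z).re :=
    (hre.eventuallyEq_of_mem (isOpen_ball.mem_nhds h0)).symm
  have hfd : fderiv ℝ h 0 1 = (deriv F 0).re := by
    rw [heq.fderiv_eq]
    have := (Complex.reCLM.hasFDerivAt.comp (0 : ℂ) (hFd.hasFDerivAt.restrictScalars ℝ)).fderiv
    change fderiv ℝ (Complex.reCLM ∘ F) 0 1 = _
    rw [this]
    simp
  have hF0 : (F 0).re = h 0 := hre h0
  rw [hfd, ← hF0]
  exact (Complex.abs_re_le_norm _).trans (norm_deriv_le_two_mul_re hF.differentiableOn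
    fun z hz => (hpos z hz).trans_eq (hre hz).symm)

/-- The isometry `ℂ ≃ ℝ²` sending `1`, `I` to the standard basis. -/
def toEuc : ℂ ≃ₗᵢ[ℝ] Euc 2 := Complex.orthonormalBasisOneI.repr

theorem toEuc_one : toEuc 1 = EuclideanSpace.single 0 1 := by
  have := Complex.orthonormalBasisOneI.repr_self 0
  simpa [toEuc] using this

theorem toEuc_I : toEuc Complex.I = EuclideanSpace.single 1 1 := by
  have := Complex.orthonormalBasisOneI.repr_self 1
  simpa [toEuc] using this

theorem toEuc_mem {z : ℂ} (hz : z ∈ ball (0 : ℂ) 1) : toEuc z ∈ unitDisk := by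
  simpa [unitDisk, mem_ball_zero_iff] using hz

theorem fderiv_pullback {d : ℕ} {f : Euc 2 → Euc d} (hf : ContDiffOn ℝ 2 f unitDisk)
    (l : Euc d →L[ℝ] ℝ) (c : ℝ) {z : ℂ} (hz : z ∈ ball (0 : ℂ) 1) (a : ℂ) :
    fderiv ℝ (fun w => c - l (f (toEuc w))) z a = -l (fderiv ℝ f (toEuc z) (toEuc a)) := by
  have hfd : DifferentiableAt ℝ f (toEuc z) :=
    (hf.contDiffAt (isOpen_ball.mem_nhds (toEuc_mem hz))).differentiableAt (by norm_num)
  have h1 : HasFDerivAt (fun w : ℂ => c - l (f (toEuc w)))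
      (-(l.comp ((fderiv ℝ f (toEuc z)).comp (toEuc.toContinuousLinearEquiv : ℂ →L[ℝ] Euc 2)))) z :=
    ((l.hasFDerivAt.comp z (hfd.hasFDerivAt.comp z
      (toEuc.toContinuousLinearEquiv : ℂ →L[ℝ] Euc 2).hasFDerivAt)).const_sub c)
  rw [h1.fderiv]
  simp

open InnerProductSpace in
theorem harmonicOnNhd_pullback {d : ℕ} {f : Euc 2 → Euc d} (hf : ConformalHarmonicOnDisk f)
    (l : Euc d →L[ℝ] ℝ) (c : ℝ) :
    HarmonicOnNhd (fun w : ℂ => c - l (f (toEuc w))) (ball 0 1) := by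
  set h : ℂ → ℝ := fun w : ℂ => c - l (f (toEuc w)) with hh
  have hC : ∀ z ∈ ball (0 : ℂ) 1, ContDiffAt ℝ 2 h z := by
    intro z hz
    have h1 : ContDiffAt ℝ 2 f (toEuc z) :=
      hf.1.contDiffAt (isOpen_ball.mem_nhds (toEuc_mem hz))
    have h2 : ContDiffAt ℝ 2 (fun w : ℂ => f (toEuc w)) z :=
      h1.comp z toEuc.contDiff.contDiffAt
    exact contDiffAt_const.sub (l.contDiff.contDiffAt.comp z h2)
  have key : ∀ z ∈ ball (0 : ℂ) 1, ∀ a : ℂ, ∀ i : Fin 2, toEuc a = EuclideanSpace.single i 1 →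
      fderiv ℝ (fderiv ℝ h) z a a
        = -l (fderiv ℝ (pd i f) (toEuc z) (EuclideanSpace.single i 1)) := by
    intro z hz a i hai
    have hd2 : DifferentiableAt ℝ (fderiv ℝ h) z :=
      ((hC z hz).fderiv_right (m := 1) (by norm_num)).differentiableAt (by norm_num)
    have e1 : fderiv ℝ (fderiv ℝ h) z a a = fderiv ℝ (fun w => fderiv ℝ h w a) z a := by
      rw [fderiv_clm_apply hd2 (by fun_prop)]
      simp
    have e2 : (fun w => fderiv ℝ h w a) =ᶠ[nhds z] fun w => 0 - l (pd i f (toEuc w)) := by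
      filter_upwards [isOpen_ball.mem_nhds hz] with w hw
      rw [hh, fderiv_pullback hf.1 l c hw a, hai, pd, zero_sub]
    have hfd : DifferentiableAt ℝ (fderiv ℝ f) (toEuc z) :=
      ((hf.1.contDiffAt (isOpen_ball.mem_nhds (toEuc_mem hz))).fderiv_right (m := 1)
        (by norm_num)).differentiableAt (by norm_num)
    have hpd : DifferentiableAt ℝ (pd i f) (toEuc z) := by
      unfold pd
      fun_prop
    have h1 : HasFDerivAt (fun w : ℂ => 0 - l (pd i f (toEuc w)))
        (-(l.comp ((fderiv ℝ (pd i f) (toEuc z)).comp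
          (toEuc.toContinuousLinearEquiv : ℂ →L[ℝ] Euc 2)))) z :=
      ((l.hasFDerivAt.comp z (hpd.hasFDerivAt.comp z
        (toEuc.toContinuousLinearEquiv : ℂ →L[ℝ] Euc 2).hasFDerivAt)).const_sub 0)
    rw [e1, e2.fderiv_eq, h1.fderiv]
    simp [hai]
  intro z hz
  refine ⟨hC z hz, ?_⟩
  filter_upwards [isOpen_ball.mem_nhds hz] with w hw
  simp only [laplacian_eq_iteratedFDeriv_complexPlane, iteratedFDeriv_two_apply, Fin.isValue,
      Matrix.cons_val_zero, Matrix.cons_val_one, Matrix.cons_val_fin_one, Pi.zero_apply]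
  rw [key w hw 1 0 toEuc_one, key w hw Complex.I 1 toEuc_I, ← neg_add, ← map_add,
    hf.2.1 _ (toEuc_mem hw), map_zero, neg_zero]

/-- Harnack gradient estimate for a conformal harmonic disk contained in a half-space. -/
theorem abs_apply_pd_le {d : ℕ} {f : Euc 2 → Euc d} (hf : ConformalHarmonicOnDisk f)
    (l : Euc d →L[ℝ] ℝ) (c : ℝ) (hlt : ∀ z ∈ unitDisk, l (f z) < c) :
    |l (pd 0 f 0)| ≤ 2 * (c - l (f 0)) := by
  have h := abs_fderiv_le_two_mul (harmonicOnNhd_pullback hf l c)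
    (fun z hz => sub_pos.2 (hlt _ (toEuc_mem hz)))
  rw [fderiv_pullback hf.1 l c (by simp), abs_neg, toEuc_one] at h
  simpa [pd] using h

/-! ### The lower bound for the minimal metric -/

theorem exists_orthogonal_same_norm {d : ℕ} (hd : 3 ≤ d) (v : Euc d) :
    ∃ w : Euc d, ‖v‖ = ‖w‖ ∧ ⟪v, w⟫ = 0 := by
  have hnt : Nontrivial (Submodule.span ℝ {v})ᗮ := by
    apply Module.nontrivial_of_finrank_pos (R := ℝ)
    have h1 := Submodule.finrank_add_finrank_orthogonal (Submodule.span ℝ {v})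
    have h2 : Module.finrank ℝ (Submodule.span ℝ {v}) ≤ 1 := by
      simpa using finrank_span_le_card (R := ℝ) ({v} : Set (Euc d))
    rw [finrank_euclideanSpace_fin] at h1
    omega
  obtain ⟨w, hw⟩ := exists_norm_eq (Submodule.span ℝ {v})ᗮ (norm_nonneg v)
  exact ⟨w, hw.symm, Submodule.mem_orthogonal_singleton_iff_inner_right.1 w.2⟩

/-- The infimum defining `minMetric` at a point of an open set is not the junk value of `sInf ∅`:
a small flat round disk with the prescribed direction is admissible. For `v = 0` the disk
degenerates to a constant map. -/
theorem minMetric_set_nonempty {d : ℕ} (hd : 3 ≤ d) {D : Set (Euc d)} (hOpen : IsOpen D)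
    {x : Euc d} (hx : x ∈ D) (v : Euc d) :
    {c : ℝ | ∃ r : ℝ, 0 < r ∧ c = 1 / r ∧
      ∃ f : Euc 2 → Euc d, ConformalHarmonicOnDisk f ∧ (∀ z ∈ unitDisk, f z ∈ D) ∧
        f 0 = x ∧ pd 0 f 0 = r • v}.Nonempty := by
  obtain ⟨w, hvw, horth⟩ := exists_orthogonal_same_norm hd v
  obtain ⟨ε, hε, hball⟩ := Metric.isOpen_iff.1 hOpen x hx
  obtain ⟨r, hr, hrε⟩ : ∃ r : ℝ, 0 < r ∧ r * (2 * ‖v‖) < ε := by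
    refine ⟨ε / (2 * ‖v‖ + 1), by positivity, ?_⟩
    rw [div_mul_eq_mul_div, div_lt_iff₀ (by positivity)]
    nlinarith
  let L : Euc 2 →L[ℝ] Euc d :=
    (EuclideanSpace.proj (0 : Fin 2) : Euc 2 →L[ℝ] ℝ).smulRight (r • v)
      + (EuclideanSpace.proj (1 : Fin 2) : Euc 2 →L[ℝ] ℝ).smulRight (r • w)
  have hL0 : L (EuclideanSpace.single 0 1) = r • v := by simp [L]
  have hL1 : L (EuclideanSpace.single 1 1) = r • w := by simp [L]
  have hpd : ∀ (i : Fin 2) (z : Euc 2),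
      pd i (fun z => x + L z) z = L (EuclideanSpace.single i 1) := by
    intro i z
    rw [pd, fderiv_const_add, L.fderiv]
  refine ⟨1 / r, r, hr, rfl, fun z => x + L z, ⟨?_, ?_, ?_⟩, ?_, by simp, by rw [hpd, hL0]⟩
  · exact (contDiff_const.add L.contDiff).contDiffOn
  · intro z _
    have hc : ∀ i : Fin 2, pd i (fun z => x + L z) = fun _ => L (EuclideanSpace.single i 1) :=
      fun i => funext (hpd i)
    simp [hc]
  · intro z _
    rw [hpd, hpd, hL0, hL1, norm_smul, norm_smul, hvw, real_inner_smul_left,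
      real_inner_smul_right, horth]
    simp
  · intro z hz
    apply hball
    have hz1 : ‖z‖ < 1 := by simpa [unitDisk] using hz
    have hz' : ∀ i, ‖z i‖ ≤ 1 := fun i => (PiLp.norm_apply_le z i).trans hz1.le
    rw [mem_ball, dist_eq_norm, add_sub_cancel_left]
    refine lt_of_le_of_lt ?_ hrε
    calc ‖L z‖ = ‖z 0 • (r • v) + z 1 • (r • w)‖ := by simp [L]
      _ ≤ ‖z 0‖ * (r * ‖v‖) + ‖z 1‖ * (r * ‖w‖) := by
          refine (norm_add_le _ _).trans_eq ?_
          simp only [norm_smul, Real.norm_of_nonneg hr.le]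
      _ ≤ 1 * (r * ‖v‖) + 1 * (r * ‖w‖) := by
          gcongr
          exacts [hz' 0, hz' 1]
      _ = r * (2 * ‖v‖) := by rw [← hvw]; ring

theorem minMetric_nonneg {d : ℕ} (D : Set (Euc d)) (x v : Euc d) : 0 ≤ minMetric D x v := by
  apply Real.sInf_nonneg
  rintro c ⟨r, hr, rfl, -⟩
  positivity

/-- On a domain in the half-space `l < c`, the minimal metric dominates that of the half-space. -/
theorem le_minMetric {d : ℕ} (hd : 3 ≤ d) {D : Set (Euc d)} (hOpen : IsOpen D)
    (l : Euc d →L[ℝ] ℝ) (c : ℝ) (hlt : ∀ y ∈ D, l y < c) {x : Euc d} (hx : x ∈ D) (v : Euc d) :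
    |l v| / (2 * (c - l x)) ≤ minMetric D x v := by
  refine le_csInf (minMetric_set_nonempty hd hOpen hx v) ?_
  rintro _ ⟨r, hr, rfl, f, hf, hfD, hf0, hpd⟩
  have h := abs_apply_pd_le hf l c fun z hz => hlt _ (hfD z hz)
  rw [hpd, hf0, map_smul, smul_eq_mul, abs_mul, abs_of_pos hr] at h
  have := hlt x hx
  rw [div_le_div_iff₀ (by linarith) hr]
  linarith

/-! ### Integration along curves -/

/-- One-sided fundamental theorem of calculus along a piecewise `C¹` curve: if `ψ` has derivative
`ψ' ≤ g` wherever `γ` is differentiable, then the increment of `ψ` is at most `∫ g`. -/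
theorem sub_le_integral_of_piecewiseC1On {d : ℕ} {γ : ℝ → Euc d} (hγ : PiecewiseC1On γ 0 1)
    {ψ : ℝ → ℝ} {ψ' g : ℝ → ℝ} (hcont : ContinuousOn ψ (Icc 0 1))
    (hderiv : ∀ t ∈ Icc (0 : ℝ) 1, DifferentiableAt ℝ γ t → HasDerivAt ψ (ψ' t) t)
    (hg : IntervalIntegrable g MeasureTheory.volume 0 1)
    (hle : ∀ t ∈ Icc (0 : ℝ) 1, ψ' t ≤ g t) : ψ 1 - ψ 0 ≤ ∫ t in (0 : ℝ)..1, g t := by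
  obtain ⟨-, n, τ, hmono, h0, h1, hC⟩ := hγ
  have hmem : ∀ k, τ k ∈ Icc (0 : ℝ) 1 := fun k =>
    ⟨h0.symm.le.trans (hmono (Fin.zero_le k)), (hmono (Fin.le_last k)).trans h1.le⟩
  have hint : ∀ j k, IntervalIntegrable g MeasureTheory.volume (τ j) (τ k) := by
    intro j k
    refine hg.mono_set ?_
    rw [uIcc_of_le (zero_le_one (α := ℝ))]
    exact (convex_Icc (0:ℝ) 1).ordConnected.uIcc_subset (hmem j) (hmem k)
  have key : ∀ k : Fin (n + 2), ψ (τ k) - ψ 0 ≤ ∫ t in (0 : ℝ)..τ k, g t := by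
    intro k
    induction k using Fin.induction with
    | zero => simp [h0]
    | succ i ih =>
      have hij : τ i.castSucc ≤ τ i.succ := hmono i.castSucc_lt_succ.le
      have hsub : Icc (τ i.castSucc) (τ i.succ) ⊆ Icc 0 1 :=
        Icc_subset_Icc (hmem _).1 (hmem _).2
      have hstep : ψ (τ i.succ) - ψ (τ i.castSucc)
          ≤ ∫ t in τ i.castSucc..τ i.succ, g t := by
        refine intervalIntegral.sub_le_integral_of_hasDeriv_right_of_le (g' := ψ') hij
          (hcont.mono hsub) (fun t ht => ?_) ?_
          (fun t ht => hle t (hsub (Ioo_subset_Icc_self ht)))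
        · refine (hderiv t (hsub (Ioo_subset_Icc_self ht)) ?_).hasDerivWithinAt
          exact ((hC i).contDiffAt (Icc_mem_nhds ht.1 ht.2)).differentiableAt (by norm_num)
        · exact (intervalIntegrable_iff_integrableOn_Icc_of_le hij).1 (hint _ _)
      have hadd := intervalIntegral.integral_add_adjacent_intervals
        (hint 0 i.castSucc) (hint i.castSucc i.succ)
      rw [h0] at hadd
      linarith
  have := key (Fin.last (n + 1))
  rwa [h1] at this

/-- In a hyperbolic domain the minimal metric is integrable along every admissible curve with
distinct endpoints: otherwise its Bochner integral would be the junk value `0`, making the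
distance of the endpoints nonpositive. -/
theorem intervalIntegrable_of_minHyperbolic {d : ℕ} {D : Set (Euc d)} (hHyp : MinHyperbolic D)
    {p q : Euc d} (hp : p ∈ D) (hq : q ∈ D) (hpq : p ≠ q) {γ : ℝ → Euc d}
    (hγ : PiecewiseC1On γ 0 1) (hγD : ∀ t ∈ Icc (0 : ℝ) 1, γ t ∈ D)
    (hγ0 : γ 0 = p) (hγ1 : γ 1 = q) :
    IntervalIntegrable (fun t => minMetric D (γ t) (deriv γ t)) MeasureTheory.volume 0 1 := by
  by_contra hnot
  have hpos := hHyp p hp q hq hpq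
  have hle : minDist D p q ≤ 0 := by
    refine csInf_le ⟨0, ?_⟩ ⟨γ, hγ, hγD, hγ0, hγ1, (intervalIntegral.integral_undef hnot).symm⟩
    rintro _ ⟨σ, -, -, -, -, rfl⟩
    exact intervalIntegral.integral_nonneg zero_le_one fun t _ => minMetric_nonneg D _ _
  linarith

/-- Lower bound for the minimal distance in a hyperbolic convex domain:
if `ξ` lies on the line through `p, q ∈ D` and `ξ ∉ D`, then
`(1/2)|log(‖ξ-p‖/‖ξ-q‖)| ≤ ρ_D(p,q)`. -/
theorem minimal_distance_convex_lower_bound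
    (d : ℕ) (hd : 3 ≤ d) (D : Set (Euc d))
    (hOpen : IsOpen D) (hConn : IsConnected D) (hConv : Convex ℝ D)
    (hHyp : MinHyperbolic D)
    (p q : Euc d) (hp : p ∈ D) (hq : q ∈ D) (hpq : p ≠ q)
    (ξ : Euc d) (hline : ∃ t : ℝ, ξ = p + t • (q - p)) (hξ : ξ ∉ D) :
    (1/2) * |Real.log (‖ξ - p‖ / ‖ξ - q‖)| ≤ minDist D p q := by
  obtain ⟨l, hl⟩ := geometric_hahn_banach_open_point hConv hOpen hξ
  have hpos : ∀ x ∈ D, 0 < l ξ - l x := fun x hx => sub_pos.2 (hl x hx)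
  -- Along the line, `x ↦ l ξ - l x` is a constant multiple of the signed distance to `ξ`.
  have hratio : ‖ξ - p‖ / ‖ξ - q‖ = (l ξ - l p) / (l ξ - l q) := by
    obtain ⟨s, hs⟩ := hline
    have h1 : ξ - p = s • (q - p) := by rw [hs]; abel
    have h2 : ξ - q = (s - 1) • (q - p) := by rw [sub_smul, one_smul, hs]; abel
    have hn : ‖q - p‖ ≠ 0 := norm_ne_zero_iff.2 (sub_ne_zero.2 hpq.symm)
    have e1 : l ξ - l p = s * l (q - p) := by rw [← map_sub, h1, map_smul, smul_eq_mul]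
    have e2 : l ξ - l q = (s - 1) * l (q - p) := by rw [← map_sub, h2, map_smul, smul_eq_mul]
    have hP := hpos p hp
    have hQ := hpos q hq
    rw [← abs_of_pos hP, ← abs_of_pos hQ, e1, e2, abs_mul, abs_mul, h1, h2, norm_smul, norm_smul,
      Real.norm_eq_abs, Real.norm_eq_abs, mul_div_mul_right _ _ hn, mul_div_mul_right]
    intro h0
    rw [e1, abs_eq_zero.1 h0, mul_zero] at hP
    exact hP.false
  rw [hratio, Real.log_div (hpos p hp).ne' (hpos q hq).ne']
  refine le_csInf ?_ ?_
  · refine ⟨_, fun t => p + t • (q - p), ?_, ?_, by simp, by simp, rfl⟩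
    · have hC : ContDiff ℝ 1 fun t : ℝ => p + t • (q - p) := by fun_prop
      refine ⟨hC.continuous.continuousOn, 0, ![0, 1], ?_, rfl, rfl, fun i => hC.contDiffOn⟩
      intro i j hij
      fin_cases i <;> fin_cases j <;> simp_all
    · intro t ht
      exact hConv.add_smul_sub_mem hp hq ht
  rintro _ ⟨γ, hγ, hγD, hγ0, hγ1, rfl⟩
  have hint := intervalIntegrable_of_minHyperbolic hHyp hp hq hpq hγ hγD hγ0 hγ1
  have hγc : ContinuousOn (fun t => Real.log (l ξ - l (γ t))) (Icc 0 1) :=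
    (continuousOn_const.sub (l.continuous.comp_continuousOn hγ.1)).log
      fun t ht => (hpos _ (hγD t ht)).ne'
  have hγd : ∀ t ∈ Icc (0 : ℝ) 1, DifferentiableAt ℝ γ t →
      HasDerivAt (fun t => Real.log (l ξ - l (γ t))) (-l (deriv γ t) / (l ξ - l (γ t))) t := by
    intro t ht hd
    exact ((l.hasFDerivAt.comp_hasDerivAt t hd.hasDerivAt).const_sub (l ξ)).log
      (hpos _ (hγD t ht)).ne'
  have hbound : ∀ t ∈ Icc (0 : ℝ) 1,
      (1 / 2) * |-l (deriv γ t) / (l ξ - l (γ t))| ≤ minMetric D (γ t) (deriv γ t) := by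
    intro t ht
    refine le_trans (le_of_eq ?_) (le_minMetric hd hOpen l (l ξ) hl (hγD t ht) (deriv γ t))
    have := hpos _ (hγD t ht)
    rw [abs_div, abs_neg, abs_of_pos this]
    field_simp
  have h1 := sub_le_integral_of_piecewiseC1On hγ (hγc.const_mul (1 / 2))
    (fun t ht hd => (hγd t ht hd).const_mul (1 / 2)) hint
    (fun t ht => le_trans (by gcongr; exact le_abs_self _) (hbound t ht))
  have h2 := sub_le_integral_of_piecewiseC1On hγ (hγc.const_mul (-(1 / 2)))
    (fun t ht hd => (hγd t ht hd).const_mul (-(1 / 2))) hint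
    (fun t ht => le_trans (by
      rw [neg_mul, ← mul_neg]; gcongr; exact neg_le_abs _) (hbound t ht))
  simp only [hγ0, hγ1] at h1 h2
  have habs : |Real.log (l ξ - l p) - Real.log (l ξ - l q)|
      ≤ 2 * ∫ t in (0 : ℝ)..1, minMetric D (γ t) (deriv γ t) := by
    rw [abs_le]
    constructor <;> linarith
  linarith
end
end

section
/- Let d ≥ 3, let D ⊂ ℝ^d be a domain, let x ∈ D and let v ∈ ℝ^d be nonzero. Then g_D(x,v) ≤ ‖v‖/δ̂_D(x,v), where for a 2-dimensional linear subspace Λ ⊂ ℝ^d, δ_D(x,Λ) := inf{‖x−y‖ : y ∈ (x+Λ)∖D} and δ̂_D(x,v) := sup{δ_D(x,Λ) : Λ a 2-dimensional linear subspace of ℝ^d with v ∈ Λ}. -/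
/-!
The bound is realised by flat disks. If `Λ ∋ v` is a 2-plane and `0 < R < δ_D(x, Λ)`, choose a unit
vector `w ∈ Λ` orthogonal to `v`; the affine map `z ↦ x + R (z₀ v/‖v‖ + z₁ w)` is conformal and
harmonic, sends the unit disk onto the disk of radius `R` about `x` in `x + Λ`, which lies in `D`,
and has `f_x(0) = (R/‖v‖) v`. Hence `g_D(x, v) ≤ ‖v‖/R` (`minMetric_le_of_disk`). Letting
`R` increase to `δ_D(x, Λ)` and taking the supremum over `Λ` gives the claim.
-/

open scoped RealInnerProductSpace ENNReal
open Metric Set Filter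

noncomputable section

/-- Every 2-dimensional subspace contains a unit vector orthogonal to a given vector `v`. -/
lemma exists_unit_orthogonal_mem {d : ℕ} (Λ : Submodule ℝ (Euc d))
    (hΛ : Module.finrank ℝ Λ = 2) (v : Euc d) :
    ∃ w ∈ Λ, ‖w‖ = 1 ∧ ⟪v, w⟫ = 0 := by
  -- The functional `⟪v, ·⟫` on the 2-dimensional space `Λ` has a nontrivial kernel.
  obtain ⟨u, hu, hu0⟩ : ∃ u ∈ LinearMap.ker ((innerₛₗ ℝ v).comp Λ.subtype), u ≠ 0 := by
    apply Submodule.exists_mem_ne_zero_of_ne_bot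
    apply LinearMap.ker_ne_bot_of_finrank_lt
    rw [hΛ, Module.finrank_self]
    norm_num
  have hu' : ⟪v, (u : Euc d)⟫ = 0 := by simpa using hu
  have hn : ‖(u : Euc d)‖ ≠ 0 := by simpa using hu0
  refine ⟨‖(u : Euc d)‖⁻¹ • (u : Euc d), Λ.smul_mem _ u.2, ?_, ?_⟩
  · rw [norm_smul, norm_inv, norm_norm, inv_mul_cancel₀ hn]
  · rw [inner_smul_right, hu', mul_zero]

/-- The linear map `z ↦ z₀ • a + z₁ • b` from `ℝ²` to `ℝ^d`. -/
def planeMap {d : ℕ} (a b : Euc d) : Euc 2 →L[ℝ] Euc d :=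
  (EuclideanSpace.proj (0 : Fin 2) : Euc 2 →L[ℝ] ℝ).smulRight a +
    (EuclideanSpace.proj (1 : Fin 2) : Euc 2 →L[ℝ] ℝ).smulRight b

lemma planeMap_apply {d : ℕ} (a b : Euc d) (z : Euc 2) :
    planeMap a b z = z 0 • a + z 1 • b := by
  simp [planeMap]

lemma pd_planeMap_zero {d : ℕ} (x a b : Euc d) (z : Euc 2) :
    pd 0 (fun z => x + planeMap a b z) z = a := by
  rw [pd, fderiv_const_add, ContinuousLinearMap.fderiv, planeMap_apply]
  simp

lemma pd_planeMap_one {d : ℕ} (x a b : Euc d) (z : Euc 2) :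
    pd 1 (fun z => x + planeMap a b z) z = b := by
  rw [pd, fderiv_const_add, ContinuousLinearMap.fderiv, planeMap_apply]
  simp

lemma conformalHarmonicOnDisk_planeMap {d : ℕ} (x a b : Euc d) (hn : ‖a‖ = ‖b‖)
    (hab : ⟪a, b⟫ = 0) : ConformalHarmonicOnDisk (fun z => x + planeMap a b z) := by
  refine ⟨(contDiff_const.add (planeMap a b).contDiff).contDiffOn, fun z _ => ?_, fun z _ => ?_⟩
  · have h0 : pd 0 (fun z => x + planeMap a b z) = fun _ => a :=
      funext (pd_planeMap_zero x a b)
    have h1 : pd 1 (fun z => x + planeMap a b z) = fun _ => b :=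
      funext (pd_planeMap_one x a b)
    rw [h0, h1]
    simp
  · rw [pd_planeMap_zero, pd_planeMap_one]
    exact ⟨hn, hab⟩

lemma norm_planeMap {d : ℕ} (a b : Euc d) (hn : ‖a‖ = ‖b‖) (hab : ⟪a, b⟫ = 0) (z : Euc 2) :
    ‖planeMap a b z‖ = ‖z‖ * ‖a‖ := by
  rw [← sq_eq_sq₀ (norm_nonneg _) (by positivity), planeMap_apply, norm_add_sq_real, mul_pow,
    EuclideanSpace.real_norm_sq_eq z]
  simp only [inner_smul_left, inner_smul_right, hab, norm_smul, mul_pow, Real.norm_eq_abs, sq_abs,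
    Fin.sum_univ_two, ← hn]
  ring_nf

/-- A flat disk of radius `R` about `x` in the plane `x + Λ`, if contained in `D`, is a
competitor in the definition of the minimal metric. -/
lemma minMetric_le_of_disk {d : ℕ} (D : Set (Euc d)) (x v : Euc d) (hv : v ≠ 0)
    (Λ : Submodule ℝ (Euc d)) (hΛ : Module.finrank ℝ Λ = 2) (hvΛ : v ∈ Λ) (R : ℝ) (hR : 0 < R)
    (hD : ∀ u ∈ Λ, ‖u‖ < R → x + u ∈ D) : minMetric D x v ≤ ‖v‖ / R := by
  obtain ⟨w, hwΛ, hw1, hvw⟩ := exists_unit_orthogonal_mem Λ hΛ v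
  have hv' : 0 < ‖v‖ := norm_pos_iff.mpr hv
  have hna : ‖(R / ‖v‖) • v‖ = R := by
    rw [norm_smul, Real.norm_of_nonneg (by positivity), div_mul_cancel₀ _ hv'.ne']
  have hn : ‖(R / ‖v‖) • v‖ = ‖R • w‖ := by
    rw [hna, norm_smul, hw1, Real.norm_of_nonneg hR.le, mul_one]
  have hab : ⟪(R / ‖v‖) • v, R • w⟫ = 0 := by
    rw [inner_smul_left, inner_smul_right, hvw]
    simp
  refine csInf_le ⟨0, ?_⟩ ⟨R / ‖v‖, by positivity, (one_div_div _ _).symm,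
    fun z => x + planeMap ((R / ‖v‖) • v) (R • w) z,
    conformalHarmonicOnDisk_planeMap _ _ _ hn hab, fun z hz => ?_, by simp, pd_planeMap_zero _ _ _ _⟩
  · rintro c ⟨r, hr, rfl, -⟩
    positivity
  · apply hD
    · rw [planeMap_apply]
      exact Λ.add_mem (Λ.smul_mem _ (Λ.smul_mem _ hvΛ)) (Λ.smul_mem _ (Λ.smul_mem _ hwΛ))
    · rw [norm_planeMap _ _ hn hab, hna]
      have : ‖z‖ < 1 := by simpa [unitDisk] using hz
      nlinarith

/-- Upper bound for the minimal metric of a domain `D ⊆ ℝ^d` (`d ≥ 3`):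
`g_D(x,v) ≤ ‖v‖/δ̂_D(x,v)` (stated in `ℝ≥0∞` so that `δ̂_D(x,v) = ∞` forces
`g_D(x,v) = 0`, as per the convention). -/
theorem minimal_metric_le_norm_div_deltaHat
    (d : ℕ) (hd : 3 ≤ d) (D : Set (Euc d)) (hOpen : IsOpen D) (hConn : IsConnected D)
    (x : Euc d) (hx : x ∈ D) (v : Euc d) (hv : v ≠ 0) :
    ENNReal.ofReal (minMetric D x v) ≤ ENNReal.ofReal ‖v‖ / deltaHat D x v := by
  -- Rewrite the claim as an upper bound on the supremum `deltaHat D x v`.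
  have hv' : ENNReal.ofReal ‖v‖ ≠ 0 := by simpa using hv
  rw [ENNReal.le_div_iff_mul_le (Or.inr hv') (Or.inr ENNReal.ofReal_ne_top), mul_comm,
    ← ENNReal.le_div_iff_mul_le (Or.inr hv') (Or.inr ENNReal.ofReal_ne_top)]
  refine iSup_le fun Λ => iSup_le fun hΛ => iSup_le fun hvΛ => ?_
  refine ENNReal.le_of_forall_nnreal_lt fun R hR => ?_
  rcases eq_or_lt_of_le (zero_le : 0 ≤ R) with rfl | hR0
  · simp
  have hR0' : (0 : ℝ) < R := by exact_mod_cast hR0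
  have key : minMetric D x v ≤ ‖v‖ / R := by
    refine minMetric_le_of_disk D x v hv Λ hΛ hvΛ R hR0' fun u hu huR => ?_
    by_contra hnot
    have h1 : (R : ℝ≥0∞) < edist x (x + u) :=
      hR.trans_le (iInf₂_le (x + u) ⟨by simpa using hu, hnot⟩)
    have h2 : edist x (x + u) < R := by
      rw [edist_lt_coe, ← NNReal.coe_lt_coe, coe_nndist]
      simpa using huR
    exact lt_asymm h1 h2
  rw [ENNReal.le_div_iff_mul_le (Or.inr hv') (Or.inr ENNReal.ofReal_ne_top),
    ← ENNReal.ofReal_coe_nnreal, ← ENNReal.ofReal_mul hR0'.le]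
  apply ENNReal.ofReal_le_ofReal
  rw [le_div_iff₀ hR0'] at key
  linarith
end
end
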